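/- Let η₀, θ₀ be Schwartz functions on ℝ^d with all moments vanishing (∫ x^α η₀(x) dx = 0 for all multi-indices α), and define η_j(x) = 2^{jd} η₀(2^j x), θ_j(x) = 2^{jd} θ₀(2^j x) for j ≥ 1. Then for any M, N ≥ 0 there is C = C(η₀, θ₀, M, N) > 0 such that ∫_{ℝ^d} |η_j * θ_k(x)| (1 + 2^{max(j,k)}|x|)^N dx ≤ C·2^{-M|j-k|} for all j, k ∈ ℕ. -/

import Mathlib

open MeasureTheory

/-!
Let `s ≤ 1` be the ratio of the coarse scale to the fine one. Rescaling by the fine scale reduces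
the estimate to `θ ⋆ g_s` with `g_s x = s ^ d • g (s • x)`. Each derivative of `g_s` gains a factor
`s`, while comparing the weight `1 + ‖x‖` with `1 + ‖s • x‖` costs a factor `s⁻¹`, so
`(1 + ‖x‖) ^ K * ‖D^m g_s x‖ ≲ s ^ (m - K)`. Since `θ` is orthogonal to the Taylor polynomials of
`g_s`, only the Taylor remainder contributes to `θ ⋆ g_s`, and this remainder inherits the weighted
bound on `D^m g_s` at the expense of powers of `1 + ‖z‖`, which `θ` absorbs. Hence
`(1 + ‖u‖) ^ K * ‖(θ ⋆ g_s) u‖ ≲ s ^ (m - K)`; it remains to choose `K` large enough for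
integrability, and then `m ≥ M + K`.
-/

section AlmostOrthogonality

open Module
open scoped Convolution SchwartzMap Nat

variable {ι E F F' G : Type*} [NormedAddCommGroup E] [NormedSpace ℝ E]
  [NormedAddCommGroup F] [NormedSpace ℝ F] [NormedAddCommGroup F'] [NormedSpace ℝ F']
  [NormedAddCommGroup G] [NormedSpace ℝ G]

theorem one_add_norm_le_mul {V : Type*} [SeminormedAddCommGroup V] (x y : V) :
    1 + ‖x‖ ≤ (1 + ‖x + y‖) * (1 + ‖y‖) := by
  have htriangle : ‖x‖ ≤ ‖x + y‖ + ‖y‖ := by simpa using norm_sub_le (x + y) y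
  nlinarith [mul_nonneg (norm_nonneg (x + y)) (norm_nonneg y)]

section Taylor

variable [CompleteSpace F]

theorem norm_sub_taylor_le {f : E → F} {n : ℕ} (hf : ContDiff ℝ (n + 1) f) {x y : E} {B : ℝ}
    (hB : ∀ t ∈ Set.Icc (0 : ℝ) 1, ‖iteratedFDeriv ℝ (n + 1) f (x + t • y)‖ ≤ B) :
    ‖f (x + y) - ∑ k ∈ Finset.range (n + 1), (k ! : ℝ)⁻¹ • iteratedFDeriv ℝ k f x fun _ ↦ y‖
      ≤ B * ‖y‖ ^ (n + 1) := by
  have hintegrand : ∀ t ∈ Set.uIoc (0 : ℝ) 1,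
      ‖(1 - t) ^ n • iteratedFDeriv ℝ (n + 1) f (x + t • y) fun _ ↦ y‖ ≤ B * ‖y‖ ^ (n + 1) := by
    intro t ht
    rw [Set.uIoc_of_le zero_le_one] at ht
    have hweight : ‖(1 - t) ^ n‖ ≤ 1 := by
      rw [norm_pow, Real.norm_of_nonneg (by linarith [ht.2])]
      exact pow_le_one₀ (by linarith [ht.2]) (by linarith [ht.1])
    have hderiv := (iteratedFDeriv ℝ (n + 1) f (x + t • y)).le_of_opNorm_le
      (hB t ⟨ht.1.le, ht.2⟩) fun _ ↦ y
    rw [Fin.prod_const] at hderiv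
    rw [norm_smul]
    exact (mul_le_of_le_one_left (norm_nonneg _) hweight).trans hderiv
  have hfactorial : ‖(n ! : ℝ)⁻¹‖ ≤ 1 := by
    rw [norm_inv, RCLike.norm_natCast]
    exact inv_le_one_of_one_le₀ (mod_cast n.factorial_pos)
  rw [map_add_eq_sum_add_integral_iteratedFDeriv fun t _ ↦ hf.contDiffAt, add_sub_cancel_left,
    norm_smul]
  refine (mul_le_of_le_one_left (norm_nonneg _) hfactorial).trans ?_
  simpa using intervalIntegral.norm_integral_le_of_norm_le_const hintegrand

theorem one_add_norm_pow_mul_norm_sub_taylor_le {f : E → F} {n K : ℕ}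
    (hf : ContDiff ℝ (n + 1) f) {A : ℝ}
    (hA : ∀ x, (1 + ‖x‖) ^ K * ‖iteratedFDeriv ℝ (n + 1) f x‖ ≤ A) (x y : E) :
    (1 + ‖x‖) ^ K *
        ‖f (x + y) - ∑ k ∈ Finset.range (n + 1), (k ! : ℝ)⁻¹ • iteratedFDeriv ℝ k f x fun _ ↦ y‖
      ≤ A * (1 + ‖y‖) ^ (K + (n + 1)) := by
  have hA₀ : 0 ≤ A := (by positivity : (0 : ℝ) ≤ _).trans (hA 0)
  have hx : 0 < (1 + ‖x‖) ^ K := by positivity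
  have hsegment : ∀ t ∈ Set.Icc (0 : ℝ) 1,
      ‖iteratedFDeriv ℝ (n + 1) f (x + t • y)‖ ≤ A * (1 + ‖y‖) ^ K / (1 + ‖x‖) ^ K := by
    intro t ht
    have hty : ‖t • y‖ ≤ ‖y‖ := by
      rw [norm_smul, Real.norm_of_nonneg ht.1]
      exact mul_le_of_le_one_left (norm_nonneg y) ht.2
    rw [le_div_iff₀' hx]
    calc (1 + ‖x‖) ^ K * ‖iteratedFDeriv ℝ (n + 1) f (x + t • y)‖
        ≤ ((1 + ‖x + t • y‖) * (1 + ‖y‖)) ^ K * ‖iteratedFDeriv ℝ (n + 1) f (x + t • y)‖ := by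
          gcongr
          exact (one_add_norm_le_mul x (t • y)).trans (by gcongr)
      _ = (1 + ‖x + t • y‖) ^ K * ‖iteratedFDeriv ℝ (n + 1) f (x + t • y)‖ * (1 + ‖y‖) ^ K := by
          rw [mul_pow]; ring
      _ ≤ A * (1 + ‖y‖) ^ K := by gcongr; exact hA _
  calc _ ≤ (1 + ‖x‖) ^ K * (A * (1 + ‖y‖) ^ K / (1 + ‖x‖) ^ K * ‖y‖ ^ (n + 1)) := by
        gcongr
        exact norm_sub_taylor_le hf hsegment
    _ = A * ((1 + ‖y‖) ^ K * ‖y‖ ^ (n + 1)) := by field_simp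
    _ ≤ A * ((1 + ‖y‖) ^ K * (1 + ‖y‖) ^ (n + 1)) := by gcongr; linarith
    _ = A * (1 + ‖y‖) ^ (K + (n + 1)) := by ring

end Taylor

section Growth

variable (L : F →L[ℝ] F' →L[ℝ] G) (θ : 𝓢(E, F)) {P : E → F'} {C : ℝ} {p : ℕ}

theorem norm_bilin_le_of_growth (hP : ∀ z, ‖P z‖ ≤ C * (1 + ‖z‖) ^ p) (z : E) :
    ‖L (θ z) (P z)‖ ≤ ‖L‖ * C * ((1 + ‖z‖) ^ p * ‖θ z‖) :=
  calc ‖L (θ z) (P z)‖ ≤ ‖L‖ * ‖θ z‖ * (C * (1 + ‖z‖) ^ p) :=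
        (L.le_opNorm₂ _ _).trans (by gcongr; exact hP z)
    _ = ‖L‖ * C * ((1 + ‖z‖) ^ p * ‖θ z‖) := by ring

variable [MeasurableSpace E] [BorelSpace E] [SecondCountableTopology E]
  (μ : Measure E) [μ.HasTemperateGrowth]

theorem integrable_one_add_norm_pow_mul_norm (p : ℕ) :
    Integrable (fun z ↦ (1 + ‖z‖) ^ p * ‖θ z‖) μ := by
  have hexpand : (fun z ↦ (1 + ‖z‖) ^ p * ‖θ z‖) =
      fun z ↦ ∑ k ∈ Finset.range (p + 1), (p.choose k : ℝ) * (‖z‖ ^ k * ‖θ z‖) := by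
    ext z
    rw [add_comm, add_pow, Finset.sum_mul]
    exact Finset.sum_congr rfl fun k _ ↦ by rw [one_pow]; ring
  rw [hexpand]
  exact integrable_finsetSum _ fun k _ ↦ (θ.integrable_pow_mul μ k).const_mul _

theorem integrable_bilin_of_growth (hcont : Continuous P)
    (hP : ∀ z, ‖P z‖ ≤ C * (1 + ‖z‖) ^ p) : Integrable (fun z ↦ L (θ z) (P z)) μ :=
  ((integrable_one_add_norm_pow_mul_norm θ μ p).const_mul _).mono'
    (by fun_prop) (.of_forall (norm_bilin_le_of_growth L θ hP))

theorem norm_integral_bilin_le_of_growth (hP : ∀ z, ‖P z‖ ≤ C * (1 + ‖z‖) ^ p) :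
    ‖∫ z, L (θ z) (P z) ∂μ‖ ≤ ‖L‖ * C * ∫ z, (1 + ‖z‖) ^ p * ‖θ z‖ ∂μ := by
  rw [← integral_const_mul]
  exact norm_integral_le_of_norm_le ((integrable_one_add_norm_pow_mul_norm θ μ p).const_mul _)
    (.of_forall (norm_bilin_le_of_growth L θ hP))

theorem integrable_bilin_multilinear {n : ℕ} (T : E [×n]→L[ℝ] F') :
    Integrable (fun z ↦ L (θ z) (T fun _ ↦ z)) μ := by
  refine integrable_bilin_of_growth L θ μ (C := ‖T‖) (p := n) (by fun_prop) fun z ↦ ?_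
  refine (T.le_opNorm _).trans ?_
  rw [Fin.prod_const]
  gcongr
  linarith

end Growth

section Moments

variable [Fintype ι]

theorem multilinear_diagonal_eq_sum (b : Basis ι ℝ E) {n : ℕ} (T : E [×n]→L[ℝ] F) (z : E) :
    (T fun _ ↦ z) = ∑ r : Fin n → ι, (∏ i, b.repr z (r i)) • T fun i ↦ b (r i) := by
  classical
  conv_lhs => rw [← b.sum_repr z]
  rw [T.map_sum fun _ j ↦ b.repr z j • b j]
  exact Finset.sum_congr rfl fun r _ ↦ T.map_smul_univ (fun i ↦ b.repr z (r i)) _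

variable [MeasurableSpace E]

/-- All moments `∫ x^α f(x) dμ(x)` vanish, the monomials `x^α` being formed from the coordinates
of `x` in the basis `b`. The Bochner integral of a nonintegrable function is zero, so this has its
intended meaning only for rapidly decreasing `f`. -/
def HasVanishingMoments (b : Basis ι ℝ E) (μ : Measure E) (f : E → F) : Prop :=
  ∀ α : ι → ℕ, ∫ x, (∏ i, b.repr x i ^ α i) • f x ∂μ = 0

variable {b : Basis ι ℝ E} {μ : Measure E}

theorem HasVanishingMoments.integral_prod_repr_smul_eq_zero {f : E → F}
    (hf : HasVanishingMoments b μ f) {n : ℕ} (r : Fin n → ι) :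
    ∫ z, (∏ i, b.repr z (r i)) • f z ∂μ = 0 := by
  classical
  have hmonomial (z : E) : ∏ i, b.repr z (r i) = ∏ j, b.repr z j ^ Finset.card {i | r i = j} := by
    simp_rw [← Finset.prod_const]
    exact (Finset.prod_fiberwise' _ r (b.repr z)).symm
  simp_rw [hmonomial]
  exact hf _

variable [FiniteDimensional ℝ E] [BorelSpace E] [μ.HasTemperateGrowth]
  [CompleteSpace F] [CompleteSpace G]

theorem HasVanishingMoments.integral_bilin_multilinear_eq_zero {θ : 𝓢(E, F)}
    (hθ : HasVanishingMoments b μ θ) (L : F →L[ℝ] F' →L[ℝ] G) {n : ℕ} (T : E [×n]→L[ℝ] F') :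
    ∫ z, L (θ z) (T fun _ ↦ z) ∂μ = 0 := by
  have hmonomial (r : Fin n → ι) : Integrable (fun z ↦ (∏ i, b.repr z (r i)) • θ z) μ := by
    simpa using integrable_bilin_multilinear (ContinuousLinearMap.lsmul ℝ ℝ).flip θ μ
      ((ContinuousMultilinearMap.mkPiAlgebra ℝ (Fin n) ℝ).compContinuousLinearMap
        fun i ↦ (b.coord (r i)).toContinuousLinearMap)
  have hexpand (z : E) : L (θ z) (T fun _ ↦ z) =
      ∑ r : Fin n → ι, L.flip (T fun i ↦ b (r i)) ((∏ i, b.repr z (r i)) • θ z) := by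
    simp [multilinear_diagonal_eq_sum b T z]
  simp_rw [hexpand]
  rw [integral_finsetSum _ fun r _ ↦ ContinuousLinearMap.integrable_comp _ (hmonomial r)]
  refine Finset.sum_eq_zero fun r _ ↦ ?_
  rw [ContinuousLinearMap.integral_comp_comm _ (hmonomial r),
    hθ.integral_prod_repr_smul_eq_zero, map_zero]

theorem HasVanishingMoments.integral_bilin_sub_polynomial {θ : 𝓢(E, F)}
    (hθ : HasVanishingMoments b μ θ) (L : F →L[ℝ] F' →L[ℝ] G) {Q : E → F'} (n : ℕ)
    (P : ∀ k, E [×k]→L[ℝ] F')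
    (hint : Integrable (fun z ↦ L (θ z) (Q z - ∑ k ∈ Finset.range n, P k fun _ ↦ z)) μ) :
    ∫ z, L (θ z) (Q z - ∑ k ∈ Finset.range n, P k fun _ ↦ z) ∂μ = ∫ z, L (θ z) (Q z) ∂μ := by
  have hP : ∀ k ∈ Finset.range n, Integrable (fun z ↦ L (θ z) (P k fun _ ↦ z)) μ :=
    fun k _ ↦ integrable_bilin_multilinear L θ μ (P k)
  have hsplit (z : E) : L (θ z) (Q z) = L (θ z) (Q z - ∑ k ∈ Finset.range n, P k fun _ ↦ z) +
      ∑ k ∈ Finset.range n, L (θ z) (P k fun _ ↦ z) := by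
    rw [← map_sum, ← map_add, sub_add_cancel]
  simp_rw [hsplit]
  rw [integral_add hint (integrable_finsetSum _ hP), integral_finsetSum _ hP,
    Finset.sum_eq_zero fun k _ ↦ hθ.integral_bilin_multilinear_eq_zero L (P k), add_zero]

theorem HasVanishingMoments.one_add_norm_pow_mul_norm_convolution_le [CompleteSpace F']
    {θ : 𝓢(E, F)} (hθ : HasVanishingMoments b μ θ) (L : F →L[ℝ] F' →L[ℝ] G) {h : E → F'}
    {n K : ℕ} (hh : ContDiff ℝ (n + 1) h) {A : ℝ}
    (hA : ∀ x, (1 + ‖x‖) ^ K * ‖iteratedFDeriv ℝ (n + 1) h x‖ ≤ A) (u : E) :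
    (1 + ‖u‖) ^ K * ‖(θ ⋆[L, μ] h) u‖
      ≤ ‖L‖ * A * ∫ z, (1 + ‖z‖) ^ (K + (n + 1)) * ‖θ z‖ ∂μ := by
  have hu : 0 < (1 + ‖u‖) ^ K := by positivity
  let P (k : ℕ) : E [×k]→L[ℝ] F' := (k ! : ℝ)⁻¹ • (iteratedFDeriv ℝ k h u).compContinuousLinearMap
    fun _ ↦ -ContinuousLinearMap.id ℝ E
  let R (z : E) : F' := h (u - z) - ∑ k ∈ Finset.range (n + 1), P k fun _ ↦ z
  have hRcont : Continuous R := by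
    have := hh.continuous
    fun_prop
  have hR (z : E) : ‖R z‖ ≤ A / (1 + ‖u‖) ^ K * (1 + ‖z‖) ^ (K + (n + 1)) := by
    have htaylor := one_add_norm_pow_mul_norm_sub_taylor_le hh hA u (-z)
    rw [norm_neg, ← sub_eq_add_neg] at htaylor
    rw [div_mul_eq_mul_div, le_div_iff₀' hu]
    exact htaylor
  have hconv : (θ ⋆[L, μ] h) u = ∫ z, L (θ z) (R z) ∂μ :=
    (hθ.integral_bilin_sub_polynomial L (n + 1) P
      (integrable_bilin_of_growth L θ μ hRcont hR)).symm
  calc (1 + ‖u‖) ^ K * ‖(θ ⋆[L, μ] h) u‖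
      ≤ (1 + ‖u‖) ^ K *
          (‖L‖ * (A / (1 + ‖u‖) ^ K) * ∫ z, (1 + ‖z‖) ^ (K + (n + 1)) * ‖θ z‖ ∂μ) := by
        rw [hconv]
        gcongr
        exact norm_integral_bilin_le_of_growth L θ μ hR
    _ = ‖L‖ * A * ∫ z, (1 + ‖z‖) ^ (K + (n + 1)) * ‖θ z‖ ∂μ := by field_simp

end Moments

/-- The `L¹`-normalised dilate `x ↦ a^d f(a x)`, where `d` is the dimension of the space. -/
noncomputable def dilate (a : ℝ) (f : E → F) (x : E) : F :=
  a ^ finrank ℝ E • f (a • x)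

theorem dilate_dilate (a c : ℝ) (f : E → F) : dilate a (dilate c f) = dilate (a * c) f := by
  ext x
  rw [dilate, dilate, dilate, smul_smul, smul_smul, mul_pow, mul_comm c a]

theorem norm_dilate_mul {c : ℝ} (hc : 0 ≤ c) (f : E → F) (w : E → ℝ) (x : E) :
    ‖dilate c f x‖ * w (c • x) = dilate c (fun u ↦ ‖f u‖ * w u) x := by
  rw [dilate, dilate, norm_smul, Real.norm_of_nonneg (by positivity), smul_eq_mul, mul_assoc]

theorem contDiff_dilate {m : WithTop ℕ∞} {f : E → F} (s : ℝ) (hf : ContDiff ℝ m f) :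
    ContDiff ℝ m (dilate s f) :=
  (hf.comp (contDiff_const_smul s)).const_smul _

theorem norm_iteratedFDeriv_dilate {f : E → F} {m : ℕ} (hf : ContDiff ℝ m f) {s : ℝ} (hs : 0 ≤ s)
    (x : E) : ‖iteratedFDeriv ℝ m (dilate s f) x‖ =
      s ^ finrank ℝ E * s ^ m * ‖iteratedFDeriv ℝ m f (s • x)‖ := by
  have hcomp : ContDiff ℝ m fun x ↦ f (s • x) := hf.comp (contDiff_const_smul s)
  unfold dilate
  rw [iteratedFDeriv_const_smul_apply' hcomp.contDiffAt, iteratedFDeriv_comp_const_smul s hf,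
    norm_smul, norm_smul, Real.norm_of_nonneg (by positivity),
    Real.norm_of_nonneg (by positivity), mul_assoc]

theorem exists_one_add_norm_pow_mul_norm_iteratedFDeriv_dilate_le (g : 𝓢(E, F)) (K m : ℕ) :
    ∃ A : ℝ, ∀ s : ℝ, 0 < s → s ≤ 1 → ∀ x,
      (1 + ‖x‖) ^ K * ‖iteratedFDeriv ℝ (K + m) (dilate s g) x‖ ≤ A * s ^ m := by
  obtain ⟨A, hA⟩ : ∃ A, ∀ x, (1 + ‖x‖) ^ K * ‖iteratedFDeriv ℝ (K + m) g x‖ ≤ A :=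
    ⟨_, SchwartzMap.one_add_le_sup_seminorm_apply (𝕜 := ℝ) (m := (K, K + m)) le_rfl le_rfl g⟩
  refine ⟨A, fun s hs hs₁ x ↦ ?_⟩
  have hweight : s * (1 + ‖x‖) ≤ 1 + ‖s • x‖ := by
    rw [norm_smul, Real.norm_of_nonneg hs.le]
    linarith
  rw [norm_iteratedFDeriv_dilate (g.smooth _) hs.le]
  calc (1 + ‖x‖) ^ K * (s ^ finrank ℝ E * s ^ (K + m) * ‖iteratedFDeriv ℝ (K + m) g (s • x)‖)
      = s ^ finrank ℝ E *
          ((s * (1 + ‖x‖)) ^ K * ‖iteratedFDeriv ℝ (K + m) g (s • x)‖ * s ^ m) := by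
        rw [mul_pow]; ring
    _ ≤ 1 * ((1 + ‖s • x‖) ^ K * ‖iteratedFDeriv ℝ (K + m) g (s • x)‖ * s ^ m) := by
        gcongr
        exact pow_le_one₀ hs.le hs₁
    _ ≤ A * s ^ m := by
        rw [one_mul]
        gcongr
        exact hA _

section Haar

variable [FiniteDimensional ℝ E] [MeasurableSpace E] [BorelSpace E] {μ : Measure E}
  [μ.IsAddHaarMeasure]

theorem integral_dilate {c : ℝ} (hc : 0 < c) (f : E → F) :
    ∫ x, dilate c f x ∂μ = ∫ x, f x ∂μ := by
  simp_rw [dilate]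
  rw [integral_smul, Measure.integral_comp_smul_of_nonneg μ f c (hR := hc.le),
    smul_inv_smul₀ (by positivity)]

theorem dilate_convolution_dilate {c : ℝ} (hc : 0 < c) (L : F →L[ℝ] F' →L[ℝ] G) (f : E → F)
    (g : E → F') : (dilate c f ⋆[L, μ] dilate c g) = dilate c (f ⋆[L, μ] g) := by
  ext x
  have hintegrand (t : E) : L (dilate c f t) (dilate c g (x - t)) =
      c ^ finrank ℝ E • dilate c (fun z ↦ L (f z) (g (c • x - z))) t := by
    simp [dilate, smul_sub]
  simp_rw [convolution_def, hintegrand]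
  rw [integral_smul, integral_dilate hc, dilate, convolution_def]

variable [Fintype ι] {b : Basis ι ℝ E} [CompleteSpace F] [CompleteSpace F'] [CompleteSpace G]

theorem HasVanishingMoments.exists_one_add_norm_pow_mul_norm_convolution_dilate_le {θ : 𝓢(E, F)}
    (hθ : HasVanishingMoments b μ θ) (L : F →L[ℝ] F' →L[ℝ] G) (g : 𝓢(E, F')) (K m : ℕ) :
    ∃ D : ℝ, ∀ s : ℝ, 0 < s → s ≤ 1 → ∀ u,
      (1 + ‖u‖) ^ K * ‖(θ ⋆[L, μ] dilate s g) u‖ ≤ D * s ^ (m + 1) := by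
  obtain ⟨A, hA⟩ := exists_one_add_norm_pow_mul_norm_iteratedFDeriv_dilate_le g K (m + 1)
  refine ⟨‖L‖ * A * ∫ z, (1 + ‖z‖) ^ (K + (K + m + 1)) * ‖θ z‖ ∂μ, fun s hs hs₁ u ↦ ?_⟩
  rw [mul_right_comm, mul_assoc ‖L‖]
  exact hθ.one_add_norm_pow_mul_norm_convolution_le L (contDiff_dilate s (g.smooth _))
    (hA s hs hs₁) u

theorem HasVanishingMoments.exists_integral_convolution_dilate_le {θ : 𝓢(E, F)}
    (hθ : HasVanishingMoments b μ θ) (L : F →L[ℝ] F' →L[ℝ] G) (g : 𝓢(E, F')) (M N : ℝ) :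
    ∃ C : ℝ, 0 < C ∧ ∀ s : ℝ, 0 < s → s ≤ 1 →
      ∫ u, ‖(θ ⋆[L, μ] dilate s g) u‖ * (1 + ‖u‖) ^ N ∂μ ≤ C * s ^ M := by
  obtain ⟨K, hK⟩ := exists_nat_gt (N + finrank ℝ E)
  obtain ⟨m, hm⟩ := exists_nat_ge M
  obtain ⟨D, hD⟩ := hθ.exists_one_add_norm_pow_mul_norm_convolution_dilate_le L g K m
  have hint : Integrable (fun u : E ↦ (1 + ‖u‖) ^ (-(K - N))) μ :=
    integrable_one_add_norm (by linarith)
  let I := ∫ u, (1 + ‖u‖) ^ (-(K - N)) ∂μ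
  refine ⟨max (D * I) 1, by positivity, fun s hs hs₁ ↦ ?_⟩
  have hpointwise (u : E) : ‖(θ ⋆[L, μ] dilate s g) u‖ * (1 + ‖u‖) ^ N
      ≤ D * s ^ (m + 1) * (1 + ‖u‖) ^ (-(K - N)) := by
    have hexp : (1 + ‖u‖) ^ N = (1 + ‖u‖) ^ K * (1 + ‖u‖) ^ (-(K - N)) := by
      rw [← Real.rpow_natCast, ← Real.rpow_add (by positivity)]
      congr 1
      ring
    rw [hexp, ← mul_assoc, mul_comm ‖_‖]
    exact mul_le_mul_of_nonneg_right (hD s hs hs₁ u) (by positivity)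
  have hpow : s ^ (m + 1) ≤ s ^ M := by
    rw [← Real.rpow_natCast]
    exact Real.rpow_le_rpow_of_exponent_ge hs hs₁ (by push_cast; linarith)
  calc _ ≤ ∫ u, D * s ^ (m + 1) * (1 + ‖u‖) ^ (-(K - N)) ∂μ :=
        integral_mono_of_nonneg (.of_forall fun u ↦ by positivity) (hint.const_mul _)
          (.of_forall hpointwise)
    _ = D * I * s ^ (m + 1) := by rw [integral_const_mul]; ring
    _ ≤ max (D * I) 1 * s ^ M := by gcongr; exact le_max_left _ _

theorem HasVanishingMoments.exists_integral_dilate_convolution_dilate_le {θ : 𝓢(E, F)}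
    (hθ : HasVanishingMoments b μ θ) (L : F →L[ℝ] F' →L[ℝ] G) (g : 𝓢(E, F')) (M N : ℝ) :
    ∃ C : ℝ, 0 < C ∧ ∀ a c : ℝ, 0 < a → a ≤ c →
      ∫ x, ‖(dilate c θ ⋆[L, μ] dilate a g) x‖ * (1 + c * ‖x‖) ^ N ∂μ ≤ C * (a / c) ^ M := by
  obtain ⟨C, hC, hbound⟩ := hθ.exists_integral_convolution_dilate_le L g M N
  refine ⟨C, hC, fun a c ha hac ↦ ?_⟩
  have hc : 0 < c := ha.trans_le hac
  have hrescale : (dilate c θ ⋆[L, μ] dilate a g) = dilate c (θ ⋆[L, μ] dilate (a / c) g) := by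
    rw [← dilate_convolution_dilate hc, dilate_dilate, mul_div_cancel₀ a hc.ne']
  have hweight (x : E) : 1 + c * ‖x‖ = 1 + ‖c • x‖ := by
    rw [norm_smul, Real.norm_of_nonneg hc.le]
  simp_rw [hrescale, hweight, norm_dilate_mul hc.le _ fun u ↦ (1 + ‖u‖) ^ N]
  rw [integral_dilate hc]
  exact hbound (a / c) (by positivity) ((div_le_one hc).2 hac)

theorem stmt_13_general (L : F →L[ℝ] F' →L[ℝ] G) {η : 𝓢(E, F)} {θ : 𝓢(E, F')}
    (hη : HasVanishingMoments b μ η) (hθ : HasVanishingMoments b μ θ) (M N : ℝ) :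
    ∃ C : ℝ, 0 < C ∧ ∀ a c : ℝ, 0 < a → 0 < c →
      ∫ x, ‖(dilate a η ⋆[L, μ] dilate c θ) x‖ * (1 + max a c * ‖x‖) ^ N ∂μ
        ≤ C * (min a c / max a c) ^ M := by
  obtain ⟨C₁, hC₁, hηfine⟩ := hη.exists_integral_dilate_convolution_dilate_le L θ M N
  obtain ⟨C₂, _, hθfine⟩ := hθ.exists_integral_dilate_convolution_dilate_le L.flip η M N
  refine ⟨max C₁ C₂, lt_max_of_lt_left hC₁, fun a c ha hc ↦ ?_⟩
  rcases le_total a c with hac | hca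
  · rw [max_eq_right hac, min_eq_left hac, ← convolution_flip]
    exact (hθfine a c ha hac).trans (by gcongr; exact le_max_right _ _)
  · rw [max_eq_left hca, min_eq_right hca]
    exact (hηfine c a hc hca).trans (by gcongr; exact le_max_left _ _)

end Haar

theorem hasVanishingMoments_basisFun_iff [Fintype ι] {f : EuclideanSpace ℝ ι → ℝ} :
    HasVanishingMoments (EuclideanSpace.basisFun ι ℝ).toBasis volume f ↔
      ∀ α : ι → ℕ, ∫ x : EuclideanSpace ℝ ι, (∏ i, x i ^ α i) * f x = 0 := by
  simp [HasVanishingMoments]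

theorem max_rpow_rpow {x : ℝ} (hx : 1 ≤ x) (s t : ℝ) : max (x ^ s) (x ^ t) = x ^ max s t :=
  (Real.monotone_rpow_of_base_ge_one hx).map_max.symm

theorem min_div_max_rpow_rpow {x : ℝ} (hx : 1 ≤ x) (s t M : ℝ) :
    (min (x ^ s) (x ^ t) / max (x ^ s) (x ^ t)) ^ M = x ^ (-(M * |s - t|)) := by
  have hx₀ : 0 < x := by linarith
  rw [max_rpow_rpow hx, ← (Real.monotone_rpow_of_base_ge_one hx).map_min, ← Real.rpow_sub hx₀,
    ← Real.rpow_mul hx₀.le, ← max_sub_min_eq_abs']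
  congr 1
  ring

end AlmostOrthogonality

/-- Almost-orthogonality estimate for dyadic dilates of moment-vanishing Schwartz
functions: with `η_j(x) = 2^{jd} η₀(2^j x)` and `θ_k(x) = 2^{kd} θ₀(2^k x)`, for any
`M, N ≥ 0` there is `C > 0` with
`∫ |η_j * θ_k(x)| (1 + 2^{max(j,k)}|x|)^N dx ≤ C 2^{-M|j-k|}` for all `j, k ∈ ℕ`. -/
theorem stmt_13 (d : ℕ) (η₀ θ₀ : SchwartzMap (EuclideanSpace ℝ (Fin d)) ℝ)
    (hη : ∀ α : Fin d → ℕ, ∫ x : EuclideanSpace ℝ (Fin d), (∏ i, x i ^ α i) * η₀ x = 0)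
    (hθ : ∀ α : Fin d → ℕ, ∫ x : EuclideanSpace ℝ (Fin d), (∏ i, x i ^ α i) * θ₀ x = 0)
    (M N : ℝ) (hM : 0 ≤ M) (hN : 0 ≤ N) :
    ∃ C : ℝ, 0 < C ∧ ∀ j k : ℕ,
      (∫ x : EuclideanSpace ℝ (Fin d),
        |∫ y : EuclideanSpace ℝ (Fin d),
            ((2 : ℝ) ^ ((j : ℝ) * d) * η₀ ((2 : ℝ) ^ (j : ℝ) • y))
              * ((2 : ℝ) ^ ((k : ℝ) * d) * θ₀ ((2 : ℝ) ^ (k : ℝ) • (x - y)))|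
          * (1 + (2 : ℝ) ^ ((max j k : ℕ) : ℝ) * ‖x‖) ^ N)
        ≤ C * (2 : ℝ) ^ (-(M * |(j : ℝ) - (k : ℝ)|)) := by
  obtain ⟨C, hC, hbound⟩ := stmt_13_general (ContinuousLinearMap.mul ℝ ℝ)
    (hasVanishingMoments_basisFun_iff.2 hη) (hasVanishingMoments_basisFun_iff.2 hθ) M N
  refine ⟨C, hC, fun j k ↦ ?_⟩
  have h := hbound (2 ^ (j : ℝ)) (2 ^ (k : ℝ)) (by positivity) (by positivity)
  rw [min_div_max_rpow_rpow one_le_two, max_rpow_rpow one_le_two] at h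
  simpa [convolution_def, dilate, Real.rpow_mul] using h
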